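/- Let q, P ∈ ℝ⁴ be linearly independent, set q₊ := q + P/2 and q₋ := q − P/2, let B₊, B₋ ∈ ℂ with q₊² ≠ B₊² and q₋² ≠ B₋² (Minkowski squares), and set D := −q² + P²/4 + B₋B₊. Suppose φ_S, φ_P, φ_Q, φ_T, c ∈ ℂ satisfy (q̸₊ − B₊·I) · (φ_S·I + φ_P·q̸ + φ_Q·P̸ + (φ_T/2)(P̸q̸ − q̸P̸)) · γ₅ · (q̸₋ − B₋·I) = c·γ₅, i.e. the sandwiched Bethe–Salpeter amplitude is purely pseudoscalar. Then D·φ_P = (B₋ − B₊)·φ_S, 2D·φ_Q = (B₋ + B₊)·φ_S, and D·φ_T = −φ_S. (These are exactly Eqs. (16)–(18) of the paper, determining φ_P, φ_Q, φ_T in terms of φ_S under the approximation of Theorem 2.) -/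

import Mathlib

/-! Write `a = q₊` and `b = q₋`. Since `γ₅` anticommutes with every slash and `γ₅² = 1`, the
hypothesis says `(a̸ - B₊) M (b̸ + B₋) = -c`, where `M` is the amplitude without its `γ₅`.
Clifford's relation `v̸² = v²` gives `(a̸ + B₊)(a̸ - B₊) = a² - B₊²` and
`(b̸ + B₋)(b̸ - B₋) = b² - B₋²`, both nonzero scalars, so `M = k (a̸ + B₊)(b̸ - B₋)` for a scalar
`k`. Expanding the right-hand side in `1, q̸, P̸, [P̸, q̸]`, and using that these four
matrices are linearly independent when `q, P` are (`coeffs_eq_zero`), gives `φ_S = -k D`,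
`φ_P = k (B₊ - B₋)`, `φ_Q = -k (B₊ + B₋) / 2` and `φ_T = k`. -/

open Matrix BigOperators

noncomputable section

abbrev M4 := Matrix (Fin 4) (Fin 4) ℂ

/-- Dirac gamma matrix γ⁰ = diag(1,1,−1,−1). -/
def γ0 : M4 := !![1,0,0,0; 0,1,0,0; 0,0,-1,0; 0,0,0,-1]
/-- Dirac gamma matrix γ¹ = [[0,σ₁],[−σ₁,0]]. -/
def γ1 : M4 := !![0,0,0,1; 0,0,1,0; 0,-1,0,0; -1,0,0,0]
/-- Dirac gamma matrix γ² = [[0,σ₂],[−σ₂,0]]. -/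
def γ2 : M4 := !![0,0,0,-Complex.I; 0,0,Complex.I,0; 0,Complex.I,0,0; -Complex.I,0,0,0]
/-- Dirac gamma matrix γ³ = [[0,σ₃],[−σ₃,0]]. -/
def γ3 : M4 := !![0,0,1,0; 0,0,0,-1; -1,0,0,0; 0,1,0,0]
/-- γ₅ := i γ⁰γ¹γ²γ³. -/
def γ5 : M4 := Complex.I • (γ0 * γ1 * γ2 * γ3)

/-- Upper-index gamma matrices γ^μ. -/
def γup : Fin 4 → M4 := ![γ0, γ1, γ2, γ3]
/-- Diagonal of the Minkowski metric g = diag(1,−1,−1,−1). -/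
def η : Fin 4 → ℂ := ![1, -1, -1, -1]
/-- Lower-index gamma matrices γ_μ (γ_0 = γ⁰, γ_k = −γᵏ). -/
def γdn (μ : Fin 4) : M4 := η μ • γup μ
/-- Minkowski metric g_{μν}. -/
def gmet (μ ν : Fin 4) : ℂ := if μ = ν then η μ else 0

/-- Feynman slash v̸ = v⁰γ⁰ − v¹γ¹ − v²γ² − v³γ³. -/
def slash (v : Fin 4 → ℂ) : M4 := v 0 • γ0 - v 1 • γ1 - v 2 • γ2 - v 3 • γ3
/-- Complexification of a real 4-vector. -/
def cx (v : Fin 4 → ℝ) : Fin 4 → ℂ := fun μ => (v μ : ℂ)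
/-- Minkowski square v² = (v⁰)² − (v¹)² − (v²)² − (v³)². -/
def msq (v : Fin 4 → ℂ) : ℂ := v 0 ^ 2 - v 1 ^ 2 - v 2 ^ 2 - v 3 ^ 2

/-- Scalar–pseudoscalar projector Pproj(M) = (1/4)(tr(M)·I + tr(γ₅M)·γ₅). -/
def Pproj (M : M4) : M4 := (1/4 : ℂ) • (M.trace • (1 : M4) + (γ5 * M).trace • γ5)

/-- Extended projector Pproj′ keeping scalar, pseudoscalar, vector and axial-vector parts. -/
def Pproj' (M : M4) : M4 :=
  (1/4 : ℂ) • (M.trace • (1 : M4) + (γ5 * M).trace • γ5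
    + ∑ μ : Fin 4, (γup μ * M).trace • γdn μ
    + ∑ μ : Fin 4, (γup μ * γ5 * M).trace • (γ5 * γdn μ))

lemma slash_eq (v : Fin 4 → ℂ) : slash v =
    !![v 0, 0, -v 3, -v 1 + Complex.I * v 2;
       0, v 0, -v 1 - Complex.I * v 2, v 3;
       v 3, v 1 - Complex.I * v 2, -v 0, 0;
       v 1 + Complex.I * v 2, -v 3, 0, -v 0] := by
  ext i j
  fin_cases i <;> fin_cases j <;> simp [slash, γ0, γ1, γ2, γ3] <;> ring

lemma γ5_eq : γ5 = !![0,0,1,0; 0,0,0,1; 1,0,0,0; 0,1,0,0] := by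
  ext i j
  fin_cases i <;> fin_cases j <;>
    simp [γ5, γ0, γ1, γ2, γ3]

lemma γ5_mul_self : γ5 * γ5 = 1 := by
  rw [γ5_eq]
  ext i j
  fin_cases i <;> fin_cases j <;> simp [Matrix.mul_apply, Fin.sum_univ_four]

lemma γ5_mul_slash (v : Fin 4 → ℂ) : γ5 * slash v = -(slash v * γ5) := by
  rw [γ5_eq, slash_eq]
  ext i j
  fin_cases i <;> fin_cases j <;> simp [Matrix.mul_apply, Fin.sum_univ_four] <;> ring

lemma slash_mul_self (v : Fin 4 → ℂ) : slash v * slash v = msq v • (1 : M4) := by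
  rw [slash_eq]
  ext i j
  fin_cases i <;> fin_cases j <;>
    simp [Matrix.mul_apply, Fin.sum_univ_four, msq] <;> ring_nf <;> simp <;> ring

lemma slash_add_smul (u v : Fin 4 → ℂ) (z : ℂ) :
    slash (u + z • v) = slash u + z • slash v := by
  simp only [slash, Pi.add_apply, Pi.smul_apply, smul_eq_mul]
  module

/-- Linearly independent real vectors have a nonvanishing `2 × 2` minor. -/
lemma exists_minor_ne_zero (q P : Fin 4 → ℝ) (h : LinearIndependent ℝ ![q, P]) :
    ∃ i j, q i * P j - q j * P i ≠ 0 := by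
  by_contra! hc
  rw [LinearIndependent.pair_iff] at h
  have hP : ∀ j, P j = 0 := fun j =>
    (h (P j) (-q j) (by
      ext i
      simp only [Pi.add_apply, Pi.smul_apply, smul_eq_mul, Pi.zero_apply]
      linear_combination hc i j)).1
  have := (h 0 1 (by ext i; simp [hP i])).2
  exact one_ne_zero this

/-- The matrices `1, q̸, P̸, [P̸, q̸]` are linearly independent over `ℂ` when the real vectors
`q, P` are linearly independent over `ℝ`. -/
lemma coeffs_eq_zero (q P : Fin 4 → ℝ) (h : LinearIndependent ℝ ![q, P]) (s x y t : ℂ)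
    (h0 : s • (1 : M4) + x • slash (cx q) + y • slash (cx P)
      + t • (slash (cx P) * slash (cx q) - slash (cx q) * slash (cx P)) = 0) :
    s = 0 ∧ x = 0 ∧ y = 0 ∧ t = 0 := by
  obtain ⟨i, j, hij⟩ := exists_minor_ne_zero q P h
  have hm : cx q i * cx P j - cx q j * cx P i ≠ 0 := by
    simp only [cx]
    exact_mod_cast hij
  generalize cx q = q at *
  generalize cx P = P at *
  have e (a b : Fin 4) := congrFun (congrFun h0 a) b
  rw [slash_eq, slash_eq] at e
  have I2 := Complex.I_sq
  have e00 := e 0 0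
  have e11 := e 1 1
  have e22 := e 2 2
  have e33 := e 3 3
  have e01 := e 0 1
  have e10 := e 1 0
  have e02 := e 0 2
  have e20 := e 2 0
  have e03 := e 0 3
  have e30 := e 3 0
  have e12 := e 1 2
  have e21 := e 2 1
  clear e h0
  simp [-mul_eq_zero] at e00 e11 e22 e33 e01 e10 e02 e20 e03 e30 e12 e21
  -- Projecting the 2 × 2 blocks onto `1, σ₁, σ₂, σ₃` separates the scalar `s`, the vector
  -- `x q + y P`, and `t` times each minor of `q, P`.
  have hs : s = 0 := by linear_combination (e00 + e11 + e22 + e33) / 4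
  have v0 : x * q 0 + y * P 0 = 0 := by linear_combination (e00 + e11 - e22 - e33) / 4
  have v3 : x * q 3 + y * P 3 = 0 := by linear_combination (e20 - e02) / 2
  have v1 : x * q 1 + y * P 1 = 0 := by linear_combination (e30 + e21 - e03 - e12) / 4
  have v2 : x * q 2 + y * P 2 = 0 := by
    linear_combination -Complex.I * (e30 - e21 + e03 - e12) / 4 + (x * q 2 + y * P 2) * I2
  have m3 : t * (q 0 * P 3 - q 3 * P 0) = 0 := by linear_combination (e20 + e02) / 4
  have m1 : t * (q 0 * P 1 - q 1 * P 0) = 0 := by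
    linear_combination (e30 + e21 + e03 + e12) / 8
  have m2 : t * (q 0 * P 2 - q 2 * P 0) = 0 := by
    linear_combination -Complex.I * (e30 - e21 - e03 + e12) / 8
      + t * (q 0 * P 2 - q 2 * P 0) * I2
  have n3 : t * (q 1 * P 2 - q 2 * P 1) = 0 := by
    linear_combination -Complex.I * (e00 - e11) / 4 + t * (q 1 * P 2 - q 2 * P 1) * I2
  have n1 : t * (q 2 * P 3 - q 3 * P 2) = 0 := by
    linear_combination -Complex.I * (e01 + e10) / 4 + t * (q 2 * P 3 - q 3 * P 2) * I2
  have n2 : t * (q 1 * P 3 - q 3 * P 1) = 0 := by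
    linear_combination (e10 - e01) / 4
  -- A nonzero minor annihilated by `t`, `x` and `y` forces all three to vanish.
  have hv : ∀ k, x * q k + y * P k = 0 := by
    intro k; fin_cases k <;> assumption
  have ht : t * (q i * P j - q j * P i) = 0 := by
    clear hm hij
    fin_cases i <;> fin_cases j <;> simp only [Fin.zero_eta, Fin.mk_one, Fin.reduceFinMk] <;> grind
  have hx : x * (q i * P j - q j * P i) = 0 := by
    linear_combination P j * hv i - P i * hv j
  have hy : y * (q i * P j - q j * P i) = 0 := by
    linear_combination q i * hv j - q j * hv i
  exact ⟨hs, (mul_eq_zero.1 hx).resolve_right hm, (mul_eq_zero.1 hy).resolve_right hm,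
    (mul_eq_zero.1 ht).resolve_right hm⟩

/-- Multiplying out the two propagator factors determines the amplitude up to a scalar. -/
lemma amplitude_eq (a b : Fin 4 → ℂ) (Bp Bm c : ℂ) (M : M4)
    (heq : (slash a - Bp • (1 : M4)) * M * γ5 * (slash b - Bm • (1 : M4)) = c • γ5) :
    ((msq a - Bp ^ 2) * (msq b - Bm ^ 2)) • M
      = (-c) • ((slash a + Bp • (1 : M4)) * (slash b - Bm • (1 : M4))) := by
  have ha : (slash a + Bp • (1 : M4)) * (slash a - Bp • (1 : M4))
      = (msq a - Bp ^ 2) • (1 : M4) := by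
    simp only [add_mul, mul_sub, slash_mul_self, smul_mul_assoc, mul_smul_comm, one_mul, mul_one]
    module
  have hb : (slash b + Bm • (1 : M4)) * (slash b - Bm • (1 : M4))
      = (msq b - Bm ^ 2) • (1 : M4) := by
    simp only [add_mul, mul_sub, slash_mul_self, smul_mul_assoc, mul_smul_comm, one_mul, mul_one]
    module
  have h5 : γ5 * (slash b - Bm • (1 : M4)) * γ5 = -(slash b + Bm • (1 : M4)) := by
    rw [mul_sub, γ5_mul_slash, sub_mul, neg_mul, mul_assoc, γ5_mul_self, mul_smul_comm,
      smul_mul_assoc, mul_one, mul_one, γ5_mul_self]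
    abel
  have h : (slash a - Bp • (1 : M4)) * M * (slash b + Bm • (1 : M4)) = (-c) • (1 : M4) := by
    have := congrArg (· * γ5) heq
    simp only [smul_mul_assoc, γ5_mul_self] at this
    rw [mul_assoc _ γ5, mul_assoc _ (γ5 * _) γ5, h5, mul_neg] at this
    rw [neg_smul, ← this, neg_neg]
  calc ((msq a - Bp ^ 2) * (msq b - Bm ^ 2)) • M
      = ((msq a - Bp ^ 2) • (1 : M4)) * M * ((msq b - Bm ^ 2) • (1 : M4)) := by
        simp only [smul_mul_assoc, mul_smul_comm, one_mul, mul_one, smul_smul]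
        rw [mul_comm]
    _ = (slash a + Bp • (1 : M4)) * ((slash a - Bp • (1 : M4)) * M * (slash b + Bm • (1 : M4)))
          * (slash b - Bm • (1 : M4)) := by
        rw [← ha, ← hb]
        simp only [mul_assoc]
    _ = _ := by
        rw [h, mul_smul_comm, mul_one, smul_mul_assoc]

/-- Eqs. (16)–(18) of the paper: if the sandwiched Bethe–Salpeter amplitude is
purely pseudoscalar, then φ_P, φ_Q, φ_T are determined from φ_S. -/
theorem bs_components_determined (q P : Fin 4 → ℝ)
    (hqP : LinearIndependent ℝ ![q, P])
    (Bp Bm φS φP φQ φT c : ℂ)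
    (h1 : msq (cx q + (1/2 : ℂ) • cx P) ≠ Bp ^ 2)
    (h2 : msq (cx q - (1/2 : ℂ) • cx P) ≠ Bm ^ 2)
    (heq : (slash (cx q + (1/2 : ℂ) • cx P) - Bp • (1 : M4)) *
        (φS • (1 : M4) + φP • slash (cx q) + φQ • slash (cx P)
          + (φT / 2) • (slash (cx P) * slash (cx q)
              - slash (cx q) * slash (cx P))) * γ5 *
        (slash (cx q - (1/2 : ℂ) • cx P) - Bm • (1 : M4))
      = c • γ5) :
    (-msq (cx q) + msq (cx P) / 4 + Bm * Bp) * φP = (Bm - Bp) * φS ∧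
    2 * (-msq (cx q) + msq (cx P) / 4 + Bm * Bp) * φQ = (Bm + Bp) * φS ∧
    (-msq (cx q) + msq (cx P) / 4 + Bm * Bp) * φT = -φS := by
  have hN : (msq (cx q + (1/2 : ℂ) • cx P) - Bp ^ 2) *
      (msq (cx q - (1/2 : ℂ) • cx P) - Bm ^ 2) ≠ 0 :=
    mul_ne_zero (sub_ne_zero.2 h1) (sub_ne_zero.2 h2)
  have hM := amplitude_eq _ _ _ _ _ _ heq
  generalize (msq (cx q + (1/2 : ℂ) • cx P) - Bp ^ 2) *
      (msq (cx q - (1/2 : ℂ) • cx P) - Bm ^ 2) = N at hM hN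
  rw [sub_eq_add_neg (cx q), ← neg_smul, slash_add_smul, slash_add_smul] at hM
  have hexp : (slash (cx q) + (1/2 : ℂ) • slash (cx P) + Bp • (1 : M4)) *
      (slash (cx q) + (-(1/2) : ℂ) • slash (cx P) - Bm • (1 : M4))
      = (msq (cx q) - msq (cx P) / 4 - Bm * Bp) • (1 : M4) + (Bp - Bm) • slash (cx q)
        + (-(Bp + Bm) / 2) • slash (cx P)
        + (1/2 : ℂ) • (slash (cx P) * slash (cx q) - slash (cx q) * slash (cx P)) := by
    simp only [add_mul, mul_sub, mul_add, slash_mul_self, smul_mul_assoc, mul_smul_comm, one_mul,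
      mul_one]
    module
  rw [hexp] at hM
  obtain ⟨hS, hP, hQ, hT⟩ := coeffs_eq_zero q P hqP
    (N * φS + c * (msq (cx q) - msq (cx P) / 4 - Bm * Bp)) (N * φP + c * (Bp - Bm))
    (N * φQ + c * (-(Bp + Bm) / 2)) (N * (φT / 2) + c * (1 / 2)) (by
      rw [← sub_eq_zero] at hM
      rw [← hM]
      module)
  refine ⟨mul_left_cancel₀ hN ?_, mul_left_cancel₀ hN ?_, mul_left_cancel₀ hN ?_⟩
  · linear_combination (-msq (cx q) + msq (cx P) / 4 + Bm * Bp) * hP - (Bm - Bp) * hS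
  · linear_combination 2 * (-msq (cx q) + msq (cx P) / 4 + Bm * Bp) * hQ - (Bm + Bp) * hS
  · linear_combination 2 * (-msq (cx q) + msq (cx P) / 4 + Bm * Bp) * hT + hS
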